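/- arXiv:1306.4236 — 2 statements merged into one kernel-verified Lean document; each statement's English description precedes it below -/
import Mathlib

section
/- For every integer k > 2 there exist constants R = R(k) and s0 = s0(k) such that for every integer s > s0, any k-uniform [R,s]-almost intersecting hypergraph has at most (s+1)·(2k-2 choose k-1) edges. -/
universe u

/-!
Write `k = n + 1`, and call `T` a core if no small set outside `T` meets all the members of `F`
containing `T`. A core is the common pairwise intersection of a long sunflower in `F`, and a member
disjoint from the core is disjoint from almost all the petals; so a core is disjoint from at most
`(1 + ε) s` members, where `ε = 1 / (4 * n.centralBinom)`.

Since every member is disjoint from many others, there are boundedly many cores of size at most `n`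
such that every member is disjoint from one of them. Discard cores until each survivor is the only
one disjoint from many members; this costs a bounded number of members. The survivors, paired with
cores of their private members, form a set-pair system, so by Bollobás's inequality there are at
most `n.centralBinom` of them. If there are fewer, summing `(1 + ε) s` over them is enough.

Otherwise equality holds in Bollobás's inequality, and every `n`-subset of some set `X` of size
`2 * n` is a core. Then for every such subset `U` there are many members with trace `U` on `X`. Each
of them is disjoint from all but at most one member with trace `X \ U`, so there are at most `s + 1`
members with that trace. A member whose trace is smaller than `n` is disjoint from half of the
members with trace `U` for at least two choices of `U`, and this compensates for it in the sum of
these bounds over `U`.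
-/

section SetPairs

open Finset

variable {ι α : Type*} {I : Finset ι} {A B : ι → Finset α} {p q n : ℕ}

lemma choose_lt_centralBinom {m : ℕ} (h : m < 2 * n) (r : ℕ) : m.choose r < n.centralBinom := by
  obtain ⟨l, rfl⟩ : ∃ l, n = l + 1 := ⟨n - 1, by omega⟩
  calc m.choose r ≤ (2 * l + 1).choose r := Nat.choose_le_choose r (by omega)
    _ ≤ (2 * l + 1).choose ((2 * l + 1) / 2) := Nat.choose_le_middle r _
    _ = (2 * l + 1).choose l := by congr 1; omega
    _ < (2 * l + 1).choose l + (2 * l + 1).choose (l + 1) :=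
        Nat.lt_add_of_pos_right (Nat.choose_pos (by omega))
    _ = (l + 1).centralBinom := (Nat.choose_succ_succ (2 * l + 1) l).symm

/-- The weight of a pair of sets of sizes `a` and `b` in Bollobás's inequality: the probability
that, in a random ordering of two disjoint such sets, the whole second set precedes the first. -/
def pairWeight (a b : ℕ) : ℚ := ((a + b).choose a : ℚ)⁻¹

lemma pairWeight_zero_right (a : ℕ) : pairWeight a 0 = 1 := by simp [pairWeight]

lemma pairWeight_comm (a b : ℕ) : pairWeight a b = pairWeight b a := by
  rw [pairWeight, pairWeight, Nat.choose_symm_add, add_comm]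

lemma pairWeight_self (n : ℕ) : pairWeight n n = (n.centralBinom : ℚ)⁻¹ := by
  rw [pairWeight, ← two_mul, Nat.centralBinom_eq_two_mul_choose]

lemma succ_mul_pairWeight (a b : ℕ) :
    (b + 1 : ℚ) * pairWeight a b = (a + b + 1) * pairWeight a (b + 1) := by
  have hpos : (0 : ℚ) < (a + b).choose a := mod_cast Nat.choose_pos (by omega)
  have hpos' : (0 : ℚ) < (a + b + 1).choose a := mod_cast Nat.choose_pos (by omega)
  have hchoose : ((a + b).choose a : ℚ) * (a + b + 1) = (a + b + 1).choose a * (b + 1) := by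
    have := Nat.choose_mul_succ_eq (a + b) a
    rw [show a + b + 1 - a = b + 1 by omega] at this
    exact_mod_cast this
  rw [pairWeight, pairWeight, ← add_assoc]
  field_simp
  linarith

lemma pairWeight_self_lt {a b : ℕ} (h : a + b < 2 * n) : pairWeight n n < pairWeight a b := by
  rw [pairWeight_self]
  exact inv_strictAnti₀ (mod_cast Nat.choose_pos (by omega))
    (mod_cast choose_lt_centralBinom h a)

lemma sum_sdiff_pairWeight_erase [DecidableEq α] {V S T : Finset α} (hS : S ⊆ V) (hT : T ⊆ V)
    (hST : Disjoint S T) (hne : T.Nonempty) :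
    ∑ x ∈ V \ S, pairWeight #S #(T.erase x) = #V * pairWeight #S #T := by
  have hTV : T ⊆ V \ S := subset_sdiff.2 ⟨hT, hST.symm⟩
  obtain ⟨b, hb⟩ : ∃ b, #T = b + 1 := ⟨#T - 1, by have := hne.card_pos; omega⟩
  have h_outside : ∑ x ∈ (V \ S) \ T, pairWeight #S #(T.erase x)
      = #((V \ S) \ T) * pairWeight #S #T := by
    rw [← nsmul_eq_mul, ← sum_const]
    exact sum_congr rfl fun x hx => by rw [erase_eq_of_notMem (mem_sdiff.1 hx).2]
  have h_inside : ∑ x ∈ T, pairWeight #S #(T.erase x) = #T * pairWeight #S b := by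
    rw [← nsmul_eq_mul, ← sum_const]
    exact sum_congr rfl fun x hx => by rw [card_erase_of_mem hx, hb, Nat.add_sub_cancel]
  have hV : #V = #((V \ S) \ T) + #T + #S := by
    rw [card_sdiff_add_card_eq_card hTV, card_sdiff_add_card_eq_card hS]
  have := succ_mul_pairWeight #S b
  rw [← sum_sdiff hTV, h_outside, h_inside, hV, hb]
  push_cast
  linarith

/-- A set-pair system, indexed by `I`: sets `A i` and `B i` such that, for indices in `I`,
`A i` and `B j` are disjoint exactly when `i = j`. -/
structure IsSetPairSystem (I : Finset ι) (A B : ι → Finset α) : Prop where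
  disjoint : ∀ i ∈ I, Disjoint (A i) (B i)
  not_disjoint : ∀ i ∈ I, ∀ j ∈ I, i ≠ j → ¬ Disjoint (A i) (B j)

/-- The ground set of the pairs `A i`, `B i` with `i` in `I`. -/
def pairGround [DecidableEq α] (I : Finset ι) (A B : ι → Finset α) : Finset α :=
  I.biUnion fun i => A i ∪ B i

lemma left_subset_pairGround [DecidableEq α] {i : ι} (hi : i ∈ I) : A i ⊆ pairGround I A B :=
  subset_union_left.trans (subset_biUnion_of_mem (fun i => A i ∪ B i) hi)

lemma right_subset_pairGround [DecidableEq α] {i : ι} (hi : i ∈ I) : B i ⊆ pairGround I A B :=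
  subset_union_right.trans (subset_biUnion_of_mem (fun i => A i ∪ B i) hi)

lemma card_pairGround_erase_lt [DecidableEq α] {x : α} (hx : x ∈ pairGround I A B) :
    #(pairGround {i ∈ I | x ∉ A i} A fun i => (B i).erase x) < #(pairGround I A B) := by
  refine card_lt_card ((ssubset_iff_of_subset fun y hy => ?_).2 ⟨x, hx, ?_⟩) <;>
    simp only [pairGround, mem_biUnion, mem_filter, mem_union, mem_erase] at * <;> grind

namespace IsSetPairSystem

lemma symm (h : IsSetPairSystem I A B) : IsSetPairSystem I B A where
  disjoint i hi := (h.disjoint i hi).symm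
  not_disjoint i hi j hj hij hd := h.not_disjoint j hj i hi hij.symm hd.symm

lemma erase [DecidableEq α] (h : IsSetPairSystem I A B) (x : α) :
    IsSetPairSystem {i ∈ I | x ∉ A i} A fun i => (B i).erase x where
  disjoint i hi := (h.disjoint i (mem_filter.1 hi).1).mono_right (erase_subset _ _)
  not_disjoint i hi j hj hij := by
    rw [mem_filter] at hi hj
    rw [← disjoint_erase_comm, erase_eq_of_notMem hi.2]
    exact h.not_disjoint i hi.1 j hj.1 hij

lemma eq_singleton (h : IsSetPairSystem I A B) {i : ι} (hi : i ∈ I) (hB : B i = ∅) :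
    I = {i} :=
  eq_singleton_iff_unique_mem.2 ⟨hi, fun j hj => by
    by_contra hij
    exact h.not_disjoint j hj i hi hij (by simp only [hB, disjoint_empty_right])⟩

lemma sum_sum_pairWeight_erase [DecidableEq α] (h : IsSetPairSystem I A B)
    (hne : ∀ i ∈ I, (B i).Nonempty) :
    ∑ x ∈ pairGround I A B, ∑ i ∈ I with x ∉ A i, pairWeight #(A i) #((B i).erase x)
      = #(pairGround I A B) * ∑ i ∈ I, pairWeight #(A i) #(B i) := by
  rw [sum_comm' (t' := I) (s' := fun i => pairGround I A B \ A i)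
    (by intro x y; simp only [mem_filter, mem_sdiff]; tauto), mul_sum]
  exact sum_congr rfl fun i hi => sum_sdiff_pairWeight_erase (left_subset_pairGround hi)
    (right_subset_pairGround hi) (h.disjoint i hi) (hne i hi)

/-- **Bollobás's inequality** -/
theorem sum_pairWeight_le_one (h : IsSetPairSystem I A B) :
    ∑ i ∈ I, pairWeight #(A i) #(B i) ≤ 1 := by
  classical
  induction hm : #(pairGround I A B) using Nat.strong_induction_on generalizing I B with
  | _ m ih =>
    subst hm
    rcases I.eq_empty_or_nonempty with rfl | ⟨i, hi⟩
    · simp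
    by_cases hne : ∀ i ∈ I, (B i).Nonempty
    · have hpos : 0 < #(pairGround I A B) :=
        card_pos.2 ((hne i hi).mono (right_subset_pairGround hi))
      refine le_of_mul_le_mul_left ?_ (Nat.cast_pos.2 hpos)
      rw [← h.sum_sum_pairWeight_erase hne, ← nsmul_eq_mul]
      exact sum_le_card_nsmul _ _ _ fun x hx => ih _ (card_pairGround_erase_lt hx) (h.erase x) rfl
    · push Not at hne
      obtain ⟨j, hj, hB⟩ := hne
      rw [h.eq_singleton hj hB, sum_singleton, hB, card_empty, pairWeight_zero_right]

end IsSetPairSystem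

/-- A set-pair system attaining equality in Bollobás's inequality. -/
structure IsTightSetPairSystem (I : Finset ι) (A B : ι → Finset α) : Prop
    extends IsSetPairSystem I A B where
  sum_pairWeight : ∑ i ∈ I, pairWeight #(A i) #(B i) = 1

namespace IsTightSetPairSystem

lemma symm (h : IsTightSetPairSystem I A B) : IsTightSetPairSystem I B A where
  toIsSetPairSystem := h.toIsSetPairSystem.symm
  sum_pairWeight := by simp only [pairWeight_comm #(B _), h.sum_pairWeight]

lemma nonempty (h : IsTightSetPairSystem I A B) : I.Nonempty :=
  nonempty_of_sum_ne_zero (h.sum_pairWeight.trans_ne one_ne_zero)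

lemma erase [DecidableEq α] (h : IsTightSetPairSystem I A B) (hne : ∀ i ∈ I, (B i).Nonempty)
    {x : α} (hx : x ∈ pairGround I A B) :
    IsTightSetPairSystem {i ∈ I | x ∉ A i} A fun i => (B i).erase x where
  toIsSetPairSystem := h.toIsSetPairSystem.erase x
  sum_pairWeight := by
    refine (sum_eq_sum_iff_of_le (g := fun _ => (1 : ℚ)) fun x _ =>
      (h.toIsSetPairSystem.erase x).sum_pairWeight_le_one).1 ?_ x hx
    rw [h.sum_sum_pairWeight_erase hne, h.sum_pairWeight, mul_one, sum_const, nsmul_one]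

/-- Averaging over the orderings of the ground set proves Bollobás's inequality, since an ordering
puts `B i` before `A i` for at most one `i`. Under equality no ordering is wasted. -/
theorem exists_forall_le (h : IsTightSetPairSystem I A B) {β : Type*} [LinearOrder β]
    (f : α → β) : ∃ i ∈ I, ∀ x ∈ B i, ∀ y ∈ A i, f x ≤ f y := by
  classical
  induction hm : #(pairGround I A B) using Nat.strong_induction_on generalizing I B with
  | _ m ih =>
    subst hm
    by_cases hne : ∀ i ∈ I, (B i).Nonempty
    · obtain ⟨i₀, hi₀⟩ := h.nonempty
      obtain ⟨x, hx, hmin⟩ := (pairGround I A B).exists_min_image f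
        ((hne i₀ hi₀).mono (right_subset_pairGround hi₀))
      obtain ⟨i, hi, hle⟩ := ih _ (card_pairGround_erase_lt hx) (h.erase hne hx) rfl
      have hiI : i ∈ I := (mem_filter.1 hi).1
      refine ⟨i, hiI, fun y hy z hz => ?_⟩
      rcases eq_or_ne y x with rfl | hyx
      · exact hmin z (left_subset_pairGround hiI hz)
      · exact hle y (mem_erase.2 ⟨hyx, hy⟩) z hz
    · push Not at hne
      obtain ⟨i, hi, hB⟩ := hne
      exact ⟨i, hi, by simp [hB]⟩

lemma exists_left_subset_insert_erase [DecidableEq α] (h : IsTightSetPairSystem I A B) {i : ι}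
    (hi : i ∈ I) {a b : α} (ha : a ∈ A i) (hb : b ∈ B i) :
    ∃ j ∈ I, A j ⊆ insert b ((A i).erase a) := by
  have hAB : ∀ x ∈ A i, x ∉ B i := fun x hx => disjoint_left.1 (h.disjoint i hi) hx
  -- The ordering that puts `a`, then `b`, then the rest of `A i` last.
  let f : α → ℕ := fun x => if x = a then 1 else if x = b then 2 else if x ∈ A i then 3 else 0
  obtain ⟨j, hj, hle⟩ := h.exists_forall_le f
  have hij : i ≠ j := by
    rintro rfl
    have := hle b hb a ha
    grind
  obtain ⟨x, hxA, hxB⟩ := not_disjoint_iff.1 (h.not_disjoint i hi j hj hij)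
  obtain ⟨y, hyA, hyB⟩ := not_disjoint_iff.1 (h.not_disjoint j hj i hi hij.symm)
  have hxa : x = a := by
    have := hle x hxB y hyA
    grind
  subst hxa
  have hxA' : x ∉ A j := fun hx => disjoint_left.1 (h.disjoint j hj) hx hxB
  refine ⟨j, hj, fun z hz => ?_⟩
  have := hle x hxB z hz
  grind

lemma exists_exchange [DecidableEq α] (h : IsTightSetPairSystem I A B) (hA : ∀ i ∈ I, #(A i) = p)
    (hB : ∀ i ∈ I, #(B i) = q) {i : ι} (hi : i ∈ I) {a b : α} (ha : a ∈ A i) (hb : b ∈ B i) :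
    ∃ j ∈ I, A j = insert b ((A i).erase a) ∧ B j = insert a ((B i).erase b) := by
  have hAB : ∀ x ∈ A i, x ∉ B i := fun x hx => disjoint_left.1 (h.disjoint i hi) hx
  obtain ⟨j, hj, hAj⟩ := h.exists_left_subset_insert_erase hi ha hb
  obtain ⟨l, hl, hBl⟩ := h.symm.exists_left_subset_insert_erase hi hb ha
  have hjl : j = l := by
    by_contra hjl
    refine h.not_disjoint j hj l hl hjl (Disjoint.mono hAj hBl ?_)
    rw [disjoint_left]
    grind
  subst hjl
  refine ⟨j, hj, eq_of_subset_of_card_le hAj ?_, eq_of_subset_of_card_le hBl ?_⟩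
  · grw [card_insert_le, card_erase_add_one ha, hA i hi, hA j hj]
  · grw [card_insert_le, card_erase_add_one hb, hB i hi, hB j hj]

lemma exists_left_eq [DecidableEq α] (h : IsTightSetPairSystem I A B) (hA : ∀ i ∈ I, #(A i) = p)
    (hB : ∀ i ∈ I, #(B i) = q) {i : ι} (hi : i ∈ I) {S : Finset α} (hS : S ⊆ A i ∪ B i)
    (hSp : #S = p) : ∃ j ∈ I, A j = S ∧ A j ∪ B j = A i ∪ B i := by
  induction hm : #(S \ A i) generalizing i with
  | zero =>
    have hsub : S ⊆ A i := sdiff_eq_empty_iff_subset.1 (card_eq_zero.1 hm)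
    exact ⟨i, hi, (eq_of_subset_of_card_le hsub (by rw [hA i hi, hSp])).symm, rfl⟩
  | succ m ih =>
    have hcard : #(A i \ S) = #(S \ A i) := card_sdiff_comm (by rw [hA i hi, hSp])
    obtain ⟨b, hb⟩ := card_pos.1 (by omega : 0 < #(S \ A i))
    obtain ⟨a, ha⟩ := card_pos.1 (by omega : 0 < #(A i \ S))
    rw [mem_sdiff] at ha hb
    have hbB : b ∈ B i := (mem_union.1 (hS hb.1)).resolve_left hb.2
    obtain ⟨j, hj, hAj, hBj⟩ := h.exists_exchange hA hB hi ha.1 hbB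
    have hunion : A j ∪ B j = A i ∪ B i := by grind
    have hdiff : S \ A j = (S \ A i).erase b := by grind
    obtain ⟨l, hl, hlS, hlU⟩ := ih hj (hunion ▸ hS)
      (by rw [hdiff, card_erase_of_mem (mem_sdiff.2 hb), hm, Nat.add_sub_cancel])
    exact ⟨l, hl, hlS, hlU.trans hunion⟩

theorem exists_forall_powersetCard_right_eq (h : IsTightSetPairSystem I A B)
    (hA : ∀ i ∈ I, #(A i) = p) (hB : ∀ i ∈ I, #(B i) = q) :
    ∃ X : Finset α, #X = p + q ∧ ∀ U ∈ X.powersetCard q, ∃ i ∈ I, B i = U := by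
  classical
  obtain ⟨i, hi⟩ := h.nonempty
  refine ⟨B i ∪ A i, ?_, fun U hU => ?_⟩
  · rw [card_union_of_disjoint (h.disjoint i hi).symm, hA i hi, hB i hi, add_comm]
  · rw [mem_powersetCard] at hU
    obtain ⟨j, hj, hjU, -⟩ := h.symm.exists_left_eq hB hA hi hU.1 hU.2
    exact ⟨j, hj, hjU⟩

end IsTightSetPairSystem

theorem IsSetPairSystem.card_lt_or_exists_forall_powersetCard (h : IsSetPairSystem I A B)
    (hA : ∀ i ∈ I, #(A i) ≤ n) (hB : ∀ i ∈ I, #(B i) ≤ n) :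
    #I < n.centralBinom ∨
      ∃ X : Finset α, #X = 2 * n ∧ ∀ U ∈ X.powersetCard n, ∃ i ∈ I, B i = U := by
  rw [or_iff_not_imp_left, not_lt]
  intro hI
  have hmax : ∀ i ∈ I, #(A i) = n ∧ #(B i) = n ∨ pairWeight n n < pairWeight #(A i) #(B i) := by
    intro i hi
    have hAi := hA i hi
    have hBi := hB i hi
    exact or_iff_not_imp_left.2 fun hne => pairWeight_self_lt (by omega)
  have hle : ∀ i ∈ I, pairWeight n n ≤ pairWeight #(A i) #(B i) := fun i hi =>
    (hmax i hi).elim (fun hi => by rw [hi.1, hi.2]) le_of_lt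
  have hone : 1 ≤ ∑ _i ∈ I, pairWeight n n := by
    rw [sum_const, nsmul_eq_mul, pairWeight_self, ← div_eq_mul_inv,
      one_le_div (mod_cast n.centralBinom_pos)]
    exact_mod_cast hI
  have hsum : ∑ i ∈ I, pairWeight #(A i) #(B i) = 1 :=
    h.sum_pairWeight_le_one.antisymm (hone.trans (sum_le_sum hle))
  have heq : ∀ i ∈ I, pairWeight n n = pairWeight #(A i) #(B i) :=
    (sum_eq_sum_iff_of_le hle).1 ((sum_le_sum hle).antisymm (hsum.trans_le hone))
  have huniform : ∀ i ∈ I, #(A i) = n ∧ #(B i) = n := fun i hi =>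
    (hmax i hi).resolve_right (heq i hi).not_lt
  rw [two_mul]
  exact IsTightSetPairSystem.exists_forall_powersetCard_right_eq ⟨h, hsum⟩
    (fun i hi => (huniform i hi).1) fun i hi => (huniform i hi).2

end SetPairs

section FlowerCores

open Finset

variable {ι α β : Type*} {F G L W : Finset (Finset α)} {T : Finset α} {k s t : ℕ}

/-- `T` is the core of a flower in `G`: the members of `G` containing `T` cannot all be met by a
set of at most `t` elements outside `T`. -/
def IsFlowerCore (G : Finset (Finset α)) (t : ℕ) (T : Finset α) : Prop :=
  ∀ Y : Finset α, #Y ≤ t → Disjoint T Y → ∃ A ∈ G, T ⊆ A ∧ Disjoint A Y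

/-- If `S` is not a core, branch over the elements of a small set meeting all members above `S`. -/
lemma exists_isFlowerCore_cover_of_subset (ht : 0 < t) (hG : ∀ A ∈ G, #A ≤ k) (d : ℕ)
    (S : Finset α) (hS : k ≤ #S + d) :
    ∃ L : Finset (Finset α), #L ≤ t ^ d ∧ (∀ T ∈ L, IsFlowerCore G t T) ∧
      ∀ A ∈ G, S ⊆ A → ∃ T ∈ L, T ⊆ A := by
  classical
  induction d generalizing S with
  | zero =>
    have heq : ∀ A ∈ G, S ⊆ A → S = A := fun A hA hSA =>
      eq_of_subset_of_card_le hSA ((hG A hA).trans hS)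
    by_cases hSG : S ∈ G
    · refine ⟨{S}, by simp, ?_, fun A _ hSA => ⟨S, mem_singleton_self S, hSA⟩⟩
      simp only [mem_singleton, forall_eq]
      exact fun Y _ hY => ⟨S, hSG, subset_rfl, hY⟩
    · exact ⟨∅, by simp, by simp, fun A hA hSA => absurd (heq A hA hSA ▸ hA) hSG⟩
  | succ d ih =>
    by_cases hcore : IsFlowerCore G t S
    · exact ⟨{S}, by simpa using Nat.one_le_pow _ _ ht, by simpa using hcore,
        fun A _ hSA => ⟨S, mem_singleton_self S, hSA⟩⟩
    · unfold IsFlowerCore at hcore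
      push Not at hcore
      obtain ⟨Y, hYt, hSY, hY⟩ := hcore
      have hbranch : ∀ y ∈ Y, ∃ L : Finset (Finset α), #L ≤ t ^ d ∧
          (∀ T ∈ L, IsFlowerCore G t T) ∧ ∀ A ∈ G, insert y S ⊆ A → ∃ T ∈ L, T ⊆ A :=
        fun y hy => ih (insert y S) (by
          rw [card_insert_of_notMem (disjoint_right.1 hSY hy)]
          omega)
      choose! L hLcard hLcore hLcover using hbranch
      refine ⟨Y.biUnion L, ?_, ?_, fun A hA hSA => ?_⟩
      · grw [card_biUnion_le_card_mul _ _ _ hLcard, hYt, pow_succ']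
      · simp only [mem_biUnion]
        rintro T ⟨y, hy, hTy⟩
        exact hLcore y hy T hTy
      · obtain ⟨y, hyA, hyY⟩ := not_disjoint_iff.1 (hY A hA hSA)
        obtain ⟨T, hT, hTA⟩ := hLcover y hyY A hA (insert_subset hyA hSA)
        exact ⟨T, mem_biUnion.2 ⟨y, hyY, hT⟩, hTA⟩

lemma exists_isFlowerCore_cover (ht : 0 < t) (hG : ∀ A ∈ G, #A ≤ k) :
    ∃ L : Finset (Finset α), #L ≤ t ^ k ∧ (∀ T ∈ L, IsFlowerCore G t T) ∧
      ∀ A ∈ G, ∃ T ∈ L, T ⊆ A := by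
  obtain ⟨L, hcard, hcore, hcover⟩ :=
    exists_isFlowerCore_cover_of_subset ht hG k ∅ (Nat.le_add_left _ _)
  exact ⟨L, hcard, hcore, fun A hA => hcover A hA (empty_subset A)⟩

lemma exists_ssubset_of_card_lt (hL : ∀ A ∈ G, ∃ T ∈ L, T ⊆ A) (hcard : #L < #G) :
    ∃ A ∈ G, ∃ T ∈ L, T ⊂ A := by
  obtain ⟨A, hA, hAL⟩ := exists_mem_notMem_of_card_lt_card hcard
  obtain ⟨T, hT, hTA⟩ := hL A hA
  exact ⟨A, hA, T, hT, hTA.ssubset_of_ne fun e => hAL (e ▸ hT)⟩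

lemma exists_isFlowerCore_card_lt (ht : 0 < t) (hG : ∀ A ∈ G, #A ≤ k) (hcard : t ^ k < #G) :
    ∃ T, IsFlowerCore G t T ∧ #T < k := by
  obtain ⟨L, hLcard, hLcore, hL⟩ := exists_isFlowerCore_cover ht hG
  obtain ⟨A, hA, T, hT, hTA⟩ := exists_ssubset_of_card_lt hL (hLcard.trans_lt hcard)
  exact ⟨T, hLcore T hT, (card_lt_card hTA).trans_le (hG A hA)⟩

lemma IsFlowerCore.exists_sunflower [DecidableEq α] (h : IsFlowerCore F t T)
    (hF : ∀ A ∈ F, #A ≤ k) (p : ℕ) (hp : p * k ≤ t) :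
    ∃ g : Fin p → Finset α, (∀ i, g i ∈ F ∧ T ⊆ g i) ∧ Pairwise fun i j => g i ∩ g j = T := by
  induction p with
  | zero => exact ⟨Fin.elim0, fun i => i.elim0, fun i => i.elim0⟩
  | succ p ih =>
    rw [add_one_mul] at hp
    obtain ⟨g, hgF, hg⟩ := ih (by omega)
    have hpetals : #(univ.biUnion fun i => g i \ T) ≤ t := by
      grw [card_biUnion_le_card_mul _ _ k fun i _ =>
        (card_le_card sdiff_subset).trans (hF _ (hgF i).1), card_fin]
      omega
    obtain ⟨A, hA, hTA, hAY⟩ := h _ hpetals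
      ((disjoint_biUnion_right _ _ _).2 fun i _ => disjoint_sdiff)
    have hAg : ∀ i, A ∩ g i = T := by
      intro i
      have hAi : Disjoint A (g i \ T) := (disjoint_biUnion_right _ _ _).1 hAY i (mem_univ i)
      refine subset_antisymm (fun x hx => ?_) (subset_inter hTA (hgF i).2)
      rw [mem_inter] at hx
      by_contra hxT
      exact disjoint_left.1 hAi hx.1 (mem_sdiff.2 ⟨hx.2, hxT⟩)
    refine ⟨Fin.cons A g, Fin.cases ⟨hA, hTA⟩ hgF, fun i j hij => ?_⟩
    cases i using Fin.cases <;> cases j using Fin.cases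
    · exact absurd rfl hij
    · exact hAg _
    · exact (inter_comm _ _).trans (hAg _)
    · exact hg fun e => hij (congrArg Fin.succ e)

lemma card_filter_not_disjoint_le [DecidableEq α] [Fintype ι] {g : ι → Finset α}
    (hg : Pairwise fun i j => g i ∩ g j = T) {B : Finset α} (hB : Disjoint T B) :
    #{i | ¬ Disjoint (g i) B} ≤ #B := by
  refine card_le_card_of_forall_subsingleton (fun i x => x ∈ g i) (fun i hi => ?_) ?_
  · obtain ⟨x, hxi, hxB⟩ := not_disjoint_iff.1 (mem_filter.1 hi).2
    exact ⟨x, hxB, hxi⟩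
  · rintro x hxB i ⟨-, hi⟩ j ⟨-, hj⟩
    by_contra hij
    exact disjoint_right.1 hB hxB (hg hij ▸ mem_inter.2 ⟨hi, hj⟩)

lemma IsFlowerCore.mul_card_disjoint_le [DecidableEq α] (h : IsFlowerCore F t T) (hk : 0 < k)
    (hF : ∀ A ∈ F, #A ≤ k) (hs : ∀ A ∈ F, #{B ∈ F | Disjoint A B} ≤ s) (m : ℕ)
    (hm : (m + 1) * k * k ≤ t) :
    m * #{B ∈ F | Disjoint T B} ≤ (m + 1) * s := by
  obtain ⟨g, hgF, hg⟩ := h.exists_sunflower hF ((m + 1) * k) hm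
  have hcount : ∀ B ∈ F, Disjoint T B → m * k ≤ #{i | Disjoint (g i) B} := by
    intro B hB hTB
    have hmeet : #{i | ¬ Disjoint (g i) B} ≤ k :=
      (card_filter_not_disjoint_le hg hTB).trans (hF B hB)
    have hsplit : #{i | Disjoint (g i) B} + #{i | ¬ Disjoint (g i) B} = m * k + k :=
      (card_filter_add_card_filter_not _).trans (by rw [card_fin, add_one_mul])
    omega
  have hdouble : #{B ∈ F | Disjoint T B} * (m * k) ≤ #(univ : Finset (Fin ((m + 1) * k))) * s :=
    card_mul_le_card_mul' (fun i B => Disjoint (g i) B)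
      (fun B hB => hcount B (mem_filter.1 hB).1 (mem_filter.1 hB).2) fun i _ =>
        (card_le_card (filter_subset_filter _ (filter_subset _ F))).trans (hs _ (hgF i).1)
  rw [card_fin] at hdouble
  refine le_of_mul_le_mul_right ?_ hk
  linarith

/-- Take `W` minimising the number of unrelated elements plus `c * #W`. -/
lemma exists_subset_card_filter_le (F : Finset β) (L : Finset ι) (r : ι → β → Prop)
    [∀ i, DecidablePred (r i)] [DecidableEq ι] (hL : ∀ b ∈ F, ∃ i ∈ L, r i b) (c : ℕ) :
    ∃ W ⊆ L, #{b ∈ F | ∀ i ∈ W, ¬ r i b} ≤ c * #L ∧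
      ∀ i ∈ W, c ≤ #{b ∈ F | r i b ∧ ∀ j ∈ W, j ≠ i → ¬ r j b} := by
  classical
  obtain ⟨W, hW, hmin⟩ := L.powerset.exists_min_image
    (fun W => #{b ∈ F | ∀ i ∈ W, ¬ r i b} + c * #W) ⟨L, mem_powerset_self L⟩
  rw [mem_powerset] at hW
  refine ⟨W, hW, ?_, fun i hi => ?_⟩
  · have huncovered : #{b ∈ F | ∀ i ∈ L, ¬ r i b} = 0 :=
      card_eq_zero.2 (filter_eq_empty_iff.2 fun b hb hall =>
        let ⟨i, hi, hib⟩ := hL b hb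
        hall i hi hib)
    have := hmin L (mem_powerset_self L)
    omega
  · have hsub : {b ∈ F | ∀ j ∈ W.erase i, ¬ r j b} ⊆
        {b ∈ F | ∀ j ∈ W, ¬ r j b} ∪ {b ∈ F | r i b ∧ ∀ j ∈ W, j ≠ i → ¬ r j b} := by
      intro b
      simp only [mem_filter, mem_union, mem_erase]
      grind
    have hle := hmin (W.erase i) (mem_powerset.2 ((erase_subset i W).trans hW))
    have hcard := (card_le_card hsub).trans (card_union_le _ _)
    rw [← card_erase_add_one hi, mul_add_one] at hle
    omega

lemma exists_isFlowerCore_disjoint_cover [DecidableEq α] (ht : 0 < t) (hF : ∀ A ∈ F, #A ≤ k)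
    (hR : ∀ A ∈ F, t ^ k < #{B ∈ F | Disjoint A B}) :
    ∃ L : Finset (Finset α), #L ≤ t ^ k ∧ (∀ T ∈ L, IsFlowerCore F t T ∧ #T < k) ∧
      ∀ A ∈ F, ∃ T ∈ L, Disjoint T A := by
  obtain ⟨L, hLcard, hLcore, hL⟩ := exists_isFlowerCore_cover ht hF
  refine ⟨{T ∈ L | #T < k}, (card_filter_le _ _).trans hLcard, fun T hT => ?_, fun A hA => ?_⟩
  · rw [mem_filter] at hT
    exact ⟨hLcore T hT.1, hT.2⟩
  · obtain ⟨B, hB, T, hT, hTB⟩ := exists_ssubset_of_card_lt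
      (fun B hB => hL B (mem_filter.1 hB).1) (hLcard.trans_lt (hR A hA))
    rw [mem_filter] at hB
    exact ⟨T, mem_filter.2 ⟨hT, (card_lt_card hTB).trans_le (hF B hB.1)⟩,
      (hB.2.mono_right hTB.subset).symm⟩

lemma isSetPairSystem_of_isFlowerCore [DecidableEq α] {S : Finset α → Finset α}
    (hW : ∀ T ∈ W, #T ≤ t)
    (hS : ∀ T ∈ W, IsFlowerCore {A ∈ F | Disjoint T A ∧ ∀ T' ∈ W, T' ≠ T → ¬ Disjoint T' A} t
      (S T)) : IsSetPairSystem W S id where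
  disjoint T hT := by
    obtain ⟨A, hA, hSA, -⟩ := hS T hT ∅ (Nat.zero_le _) (disjoint_empty_right _)
    exact (mem_filter.1 hA).2.1.symm.mono_left hSA
  not_disjoint T hT T' hT' hne hdisj := by
    obtain ⟨A, hA, -, hAT'⟩ := hS T hT T' (hW T' hT') hdisj
    exact (mem_filter.1 hA).2.2 T' hT' hne.symm hAT'.symm

/-- Each `T` in an irredundant `W` is disjoint from many members of `F` that meet all the other
sets of `W`; a core of those members, paired with `T`, gives a set-pair system. -/
theorem exists_isFlowerCore_family [DecidableEq α] {n : ℕ} (ht : 0 < t) (hnt : n ≤ t)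
    (hF : ∀ A ∈ F, #A ≤ n + 1) (hR : ∀ A ∈ F, t ^ (n + 1) < #{B ∈ F | Disjoint A B}) :
    (∃ W : Finset (Finset α), #W < n.centralBinom ∧ (∀ T ∈ W, IsFlowerCore F t T) ∧
      #{A ∈ F | ∀ T ∈ W, ¬ Disjoint T A} ≤ (t ^ (n + 1) + 1) * t ^ (n + 1)) ∨
    ∃ X : Finset α, #X = 2 * n ∧ ∀ U ∈ X.powersetCard n, IsFlowerCore F t U := by
  obtain ⟨L, hLcard, hLcore, hL⟩ := exists_isFlowerCore_disjoint_cover ht hF hR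
  obtain ⟨W, hWL, hrest, hprivate⟩ := exists_subset_card_filter_le F L Disjoint hL (t ^ (n + 1) + 1)
  have hcore : ∀ T ∈ W, IsFlowerCore F t T := fun T hT => (hLcore T (hWL hT)).1
  have hWn : ∀ T ∈ W, #T ≤ n := fun T hT => Nat.lt_succ_iff.1 (hLcore T (hWL hT)).2
  have hS : ∀ T ∈ W, ∃ S, IsFlowerCore
      {A ∈ F | Disjoint T A ∧ ∀ T' ∈ W, T' ≠ T → ¬ Disjoint T' A} t S ∧ #S < n + 1 := fun T hT =>
    exists_isFlowerCore_card_lt ht (fun A hA => hF A (mem_filter.1 hA).1) (hprivate T hT)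
  choose! S hScore hSn using hS
  have hsystem := isSetPairSystem_of_isFlowerCore (fun T hT => (hWn T hT).trans hnt) hScore
  rcases hsystem.card_lt_or_exists_forall_powersetCard
    (fun T hT => Nat.lt_succ_iff.1 (hSn T hT)) hWn with hlt | ⟨X, hX, hXW⟩
  · exact Or.inl ⟨W, hlt, hcore, hrest.trans (Nat.mul_le_mul_left _ hLcard)⟩
  · refine Or.inr ⟨X, hX, fun U hU => ?_⟩
    obtain ⟨T, hT, rfl⟩ := hXW U hU
    exact hcore T hT

end FlowerCores

section TraceFibers

open Finset

variable {ι α : Type*} {F : Finset (Finset α)} {A B S U X : Finset α} {n s : ℕ}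

lemma one_lt_card_powersetCard (hn : 0 < n) (h : n < #S) : 1 < #(S.powersetCard n) := by
  rw [card_powersetCard]
  calc 1 < (n + 1).choose n := by rw [Nat.choose_succ_self_right]; omega
    _ ≤ (#S).choose n := Nat.choose_le_choose n h

lemma four_mul_sum_add_le {W : Finset ι} {f : ι → ℕ} {M : ℕ} (hW : #W < M)
    (hf : ∀ i ∈ W, 4 * M * f i ≤ (4 * M + 1) * s) :
    4 * ∑ i ∈ W, f i + 3 * s ≤ 4 * (M * s) := by
  obtain ⟨m, rfl⟩ : ∃ m, M = m + 1 := ⟨M - 1, by omega⟩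
  have hsum : 4 * (m + 1) * ∑ i ∈ W, f i ≤ m * ((4 * (m + 1) + 1) * s) := by
    rw [mul_sum]
    grw [sum_le_card_nsmul _ _ _ hf, smul_eq_mul, Nat.lt_succ_iff.1 hW]
  refine le_of_mul_le_mul_left ?_ (Nat.succ_pos m)
  nlinarith

lemma card_le_mul_of_forall_mul_card_filter_le {β : Type*} {P : Finset β} {W : Finset ι}
    {r : ι → β → Prop} [∀ i, DecidablePred (r i)] {M : ℕ} (hW : #W < M)
    (hr : ∀ i ∈ W, 4 * M * #{b ∈ P | r i b} ≤ (4 * M + 1) * s)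
    (hrest : 4 * #{b ∈ P | ∀ i ∈ W, ¬ r i b} ≤ 3 * s) : #P ≤ M * s := by
  classical
  have hsub : P ⊆ (W.biUnion fun i => {b ∈ P | r i b}) ∪ {b ∈ P | ∀ i ∈ W, ¬ r i b} := by
    intro b hb
    simp only [mem_union, mem_biUnion, mem_filter]
    grind
  have hsum := four_mul_sum_add_le hW hr
  have hcover := card_le_card hsub
  grw [card_union_le, card_biUnion_le] at hcover
  omega

variable [DecidableEq α]

/-- The members of `F` whose trace on `X` is `S`. -/
def traceFiber (F : Finset (Finset α)) (X S : Finset α) : Finset (Finset α) :=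
  {A ∈ F | A ∩ X = S}

lemma mem_traceFiber : A ∈ traceFiber F X S ↔ A ∈ F ∧ A ∩ X = S := mem_filter

lemma traceFiber_subset : traceFiber F X S ⊆ F := filter_subset _ _

lemma sdiff_mem_powersetCard (hX : #X = 2 * n) (hU : U ∈ X.powersetCard n) :
    X \ U ∈ X.powersetCard n := by
  rw [mem_powersetCard] at hU ⊢
  exact ⟨sdiff_subset, by rw [card_sdiff_of_subset hU.1, hX, hU.2]; omega⟩

/-- A member of the fibre that meets `B` must be `insert x S` with `x ∈ B \ X`. -/
lemma card_traceFiber_filter_not_disjoint_le (hF : ∀ A ∈ F, #A ≤ #S + 1) (hB : Disjoint B S) :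
    #{A ∈ traceFiber F X S | ¬ Disjoint B A} ≤ #(B \ X) := by
  refine (card_le_card (t := (B \ X).image fun x => insert x S) fun A hA => ?_).trans
    card_image_le
  rw [mem_filter, mem_traceFiber] at hA
  obtain ⟨⟨hAF, rfl⟩, hBA⟩ := hA
  obtain ⟨x, hxB, hxA⟩ := not_disjoint_iff.1 hBA
  have hxS : x ∉ A ∩ X := disjoint_left.1 hB hxB
  have hxX : x ∉ X := fun hx => hxS (mem_inter.2 ⟨hxA, hx⟩)
  refine mem_image.2 ⟨x, mem_sdiff.2 ⟨hxB, hxX⟩, ?_⟩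
  exact eq_of_subset_of_card_le (insert_subset hxA inter_subset_left)
    (by rw [card_insert_of_notMem hxS]; exact hF A hAF)

lemma card_traceFiber_le (hF : ∀ A ∈ F, #A ≤ #S + 1) (hB : Disjoint B S) :
    #(traceFiber F X S) ≤ #{A ∈ traceFiber F X S | Disjoint B A} + #(B \ X) := by
  rw [← card_filter_add_card_filter_not (s := traceFiber F X S) (Disjoint B)]
  exact Nat.add_le_add_left (card_traceFiber_filter_not_disjoint_le hF hB) _

lemma mem_traceFiber_or_mem_powersetCard_or_exists_disjoint (hX : #X = 2 * n) (hAF : A ∈ F)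
    (hA : #A ≤ n + 1) (hU : U ∈ X.powersetCard n) :
    A ∈ traceFiber F X U ∨ A ∈ X.powersetCard (n + 1) ∨
      ∃ V ∈ (X.powersetCard n).erase (X \ U), Disjoint V A := by
  have hsplit : #(A ∩ X) + #(X \ A) = 2 * n := by
    rw [inter_comm, card_inter_add_card_sdiff, hX]
  have hdisj : ∀ V ∈ (X \ A).powersetCard n, V ≠ X \ U →
      ∃ V ∈ (X.powersetCard n).erase (X \ U), Disjoint V A := fun V hV hne =>
    ⟨V, mem_erase.2 ⟨hne, powersetCard_mono sdiff_subset hV⟩,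
      sdiff_disjoint.mono_left (mem_powersetCard.1 hV).1⟩
  rcases lt_trichotomy #(X \ A) n with hlt | heq | hgt
  · have hAX : A ∩ X = A := eq_of_subset_of_card_le inter_subset_left (by omega)
    exact Or.inr (Or.inl (mem_powersetCard.2
      ⟨inter_eq_left.1 hAX, by rw [hAX] at hsplit; omega⟩))
  · by_cases hne : X \ A = X \ U
    · refine Or.inl (mem_traceFiber.2 ⟨hAF, ?_⟩)
      rw [inter_comm, ← sdiff_sdiff_self_left, hne,
        Finset.sdiff_sdiff_eq_self (mem_powersetCard.1 hU).1]
    · exact Or.inr (Or.inr (hdisj _ (mem_powersetCard.2 ⟨subset_rfl, heq⟩) hne))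
  · obtain ⟨V, hV, hne⟩ := exists_mem_ne (one_lt_card_powersetCard (by omega) hgt) (X \ U)
    exact Or.inr (Or.inr (hdisj V hV hne))

lemma card_le_card_traceFiber_add (hF : ∀ A ∈ F, #A ≤ n + 1) (hX : #X = 2 * n)
    (hU : U ∈ X.powersetCard n) :
    #F ≤ #(traceFiber F X U) + (2 * n).choose (n + 1) +
      ∑ V ∈ (X.powersetCard n).erase (X \ U), #{A ∈ F | Disjoint V A} := by
  have hsub : F ⊆ (traceFiber F X U ∪ X.powersetCard (n + 1)) ∪
      ((X.powersetCard n).erase (X \ U)).biUnion fun V => {A ∈ F | Disjoint V A} := by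
    intro A hA
    have := mem_traceFiber_or_mem_powersetCard_or_exists_disjoint hX hA (hF A hA) hU
    simp only [mem_union, mem_biUnion, mem_filter]
    grind
  grw [card_le_card hsub, card_union_le, card_union_le, card_biUnion_le, card_powersetCard, hX]

lemma three_mul_le_card_traceFiber (hF : ∀ A ∈ F, #A ≤ n + 1) (hX : #X = 2 * n)
    (hXs : ∀ U ∈ X.powersetCard n,
      4 * n.centralBinom * #{A ∈ F | Disjoint U A} ≤ (4 * n.centralBinom + 1) * s)
    (hFs : n.centralBinom * s ≤ #F) (hU : U ∈ X.powersetCard n) :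
    3 * s ≤ 4 * #(traceFiber F X U) + 4 * (2 * n).choose (n + 1) := by
  have hcard : #((X.powersetCard n).erase (X \ U)) < n.centralBinom := by
    rw [Nat.centralBinom_eq_two_mul_choose, ← hX, ← card_powersetCard]
    exact card_erase_lt_of_mem (sdiff_mem_powersetCard hX hU)
  have hsum := four_mul_sum_add_le hcard fun V hV => hXs V (mem_of_mem_erase hV)
  have hcover := card_le_card_traceFiber_add hF hX hU
  omega

/-- Otherwise a member `B` disjoint from `A` misses two `n`-subsets of `X`, hence almost all of the
two corresponding fibres. -/
lemma card_inter_le_of_large_traceFibers (hF : ∀ A ∈ F, #A ≤ n + 1)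
    (hs : ∀ A ∈ F, #{B ∈ F | Disjoint A B} ≤ s) (hX : #X = 2 * n)
    (hlarge : ∀ U ∈ X.powersetCard n, s + 2 * (n + 1) < 2 * #(traceFiber F X U))
    (hA : ∃ B ∈ F, Disjoint A B) : #(A ∩ X) ≤ n := by
  by_contra! hAX
  obtain ⟨B, hB, hAB⟩ := hA
  have hXB : n < #(X \ B) := hAX.trans_le
    (card_le_card (subset_sdiff.2 ⟨inter_subset_right, hAB.mono_left inter_subset_left⟩))
  have hn : 0 < n := by
    have := card_le_card (sdiff_subset : X \ B ⊆ X)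
    omega
  obtain ⟨S, hS, S', hS', hne⟩ := one_lt_card.1 (one_lt_card_powersetCard hn hXB)
  have hfiber : ∀ S ∈ (X \ B).powersetCard n,
      s < 2 * #{A ∈ traceFiber F X S | Disjoint B A} := by
    intro S hS
    have hBX : #(B \ X) ≤ n + 1 := (card_le_card sdiff_subset).trans (hF B hB)
    have := hlarge S (powersetCard_mono sdiff_subset hS)
    rw [mem_powersetCard] at hS
    have := card_traceFiber_le (X := X) (by rwa [hS.2]) (disjoint_sdiff.mono_right hS.1)
    omega
  have hdisj : Disjoint {A ∈ traceFiber F X S | Disjoint B A}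
      {A ∈ traceFiber F X S' | Disjoint B A} := by
    rw [disjoint_left]
    intro C hC hC'
    rw [mem_filter, mem_traceFiber] at hC hC'
    exact hne (hC.1.2.symm.trans hC'.1.2)
  have hsub : {A ∈ traceFiber F X S | Disjoint B A} ∪ {A ∈ traceFiber F X S' | Disjoint B A} ⊆
      {A ∈ F | Disjoint B A} :=
    union_subset (filter_subset_filter _ traceFiber_subset)
      (filter_subset_filter _ traceFiber_subset)
  have hle := (card_le_card hsub).trans (hs B hB)
  rw [card_union_of_disjoint hdisj] at hle
  have := hfiber S hS
  have := hfiber S' hS'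
  omega

lemma card_traceFiber_add_card_disjoint_le (hF : ∀ A ∈ F, #A ≤ n + 1)
    (hs : ∀ A ∈ F, #{B ∈ F | Disjoint A B} ≤ s) (hX : #X = 2 * n)
    (hU : U ∈ X.powersetCard n) (hB : B ∈ traceFiber F X U) :
    #(traceFiber F X (X \ U)) + #{A ∈ F | #(A ∩ X) < n ∧ Disjoint B A} ≤ s + 1 := by
  have hXU : #(X \ U) = n := (mem_powersetCard.1 (sdiff_mem_powersetCard hX hU)).2
  rw [mem_traceFiber] at hB
  obtain ⟨hBF, rfl⟩ := hB
  have hBX : #(B \ X) ≤ 1 := by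
    have := card_inter_add_card_sdiff B X
    have := (mem_powersetCard.1 hU).2
    have := hF B hBF
    omega
  have hfiber := card_traceFiber_le (X := X) (by rwa [hXU])
    (by rw [disjoint_left]; grind : Disjoint B (X \ (B ∩ X)))
  have hdisj : Disjoint {A ∈ traceFiber F X (X \ (B ∩ X)) | Disjoint B A}
      {A ∈ F | #(A ∩ X) < n ∧ Disjoint B A} := by
    rw [disjoint_left]
    intro A hA hA'
    rw [mem_filter, mem_traceFiber] at hA
    rw [mem_filter, hA.1.2, hXU] at hA'
    exact lt_irrefl n hA'.2.1
  have hsub : {A ∈ traceFiber F X (X \ (B ∩ X)) | Disjoint B A} ∪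
      {A ∈ F | #(A ∩ X) < n ∧ Disjoint B A} ⊆ {A ∈ F | Disjoint B A} :=
    union_subset (filter_subset_filter _ traceFiber_subset)
      (monotone_filter_right F fun _ _ h => h.2)
  have hle := (card_le_card hsub).trans (hs B hBF)
  rw [card_union_of_disjoint hdisj] at hle
  omega

/-- Average the preceding bound over `B` in the fibre of `U`: a set disjoint from `U` is disjoint
from at least half of the fibre. -/
lemma two_mul_card_traceFiber_add_card_disjoint_le (hF : ∀ A ∈ F, #A ≤ n + 1)
    (hs : ∀ A ∈ F, #{B ∈ F | Disjoint A B} ≤ s) (hX : #X = 2 * n)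
    (hU : U ∈ X.powersetCard n) (hlarge : 2 * (n + 1) ≤ #(traceFiber F X U)) :
    2 * #(traceFiber F X (X \ U)) + #{A ∈ F | #(A ∩ X) < n ∧ Disjoint U A} ≤ 2 * (s + 1) := by
  set P := traceFiber F X (X \ U)
  set Q := traceFiber F X U
  set D := {A ∈ F | #(A ∩ X) < n ∧ Disjoint U A}
  have hupper : ∀ B ∈ Q, #P + #{A ∈ D | Disjoint B A} ≤ s + 1 := by
    intro B hB
    grw [← card_traceFiber_add_card_disjoint_le hF hs hX hU hB]
    gcongr
    intro A
    simp only [D, mem_filter]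
    tauto
  have hlower : ∀ A ∈ D, #Q ≤ 2 * #{B ∈ Q | Disjoint B A} := by
    intro A hA
    rw [mem_filter] at hA
    have hAX : #(A \ X) ≤ n + 1 := (card_le_card sdiff_subset).trans (hF A hA.1)
    have hfiber : #Q ≤ #{B ∈ Q | Disjoint A B} + #(A \ X) :=
      card_traceFiber_le (by rwa [(mem_powersetCard.1 hU).2]) hA.2.2.symm
    simp only [disjoint_comm (a := A)] at hfiber
    omega
  have hsum_upper := sum_le_sum hupper
  have hsum_lower := sum_le_sum hlower
  have hdouble := sum_card_bipartiteAbove_eq_sum_card_bipartiteBelow (s := Q) (t := D)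
    fun B A => Disjoint B A
  simp only [bipartiteAbove, bipartiteBelow] at hdouble
  simp only [sum_add_distrib, sum_const, smul_eq_mul, ← mul_sum] at hsum_upper hsum_lower
  refine le_of_mul_le_mul_left ?_ (by omega : 0 < #Q)
  linarith

/-- A member meeting `X` in fewer than `n` elements is disjoint from two `n`-subsets of `X`, which
is why it is counted with weight two. -/
lemma two_mul_card_le_sum_traceFiber_add (hX : #X = 2 * n) (hFX : ∀ A ∈ F, #(A ∩ X) ≤ n) :
    2 * #F ≤ ∑ U ∈ X.powersetCard n,
      (2 * #(traceFiber F X (X \ U)) + #{A ∈ F | #(A ∩ X) < n ∧ Disjoint U A}) := by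
  set D := {A ∈ F | #(A ∩ X) < n}
  have hcover : #F ≤ ∑ U ∈ X.powersetCard n, #(traceFiber F X (X \ U)) + #D := by
    have hsub : F ⊆ ((X.powersetCard n).biUnion fun U => traceFiber F X (X \ U)) ∪ D := by
      intro A hA
      rw [mem_union, mem_biUnion]
      rcases (hFX A hA).lt_or_eq with hlt | heq
      · exact Or.inr (mem_filter.2 ⟨hA, hlt⟩)
      · refine Or.inl ⟨X \ (A ∩ X), sdiff_mem_powersetCard hX
          (mem_powersetCard.2 ⟨inter_subset_right, heq⟩), mem_traceFiber.2 ⟨hA, ?_⟩⟩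
        rw [Finset.sdiff_sdiff_eq_self inter_subset_right]
    grw [card_le_card hsub, card_union_le, card_biUnion_le]
  have hdouble : #D * 2 ≤ ∑ U ∈ X.powersetCard n, #{A ∈ F | #(A ∩ X) < n ∧ Disjoint U A} := by
    have hcount := sum_card_bipartiteAbove_eq_sum_card_bipartiteBelow (s := X.powersetCard n)
      (t := D) fun U A => Disjoint U A
    simp only [bipartiteAbove, bipartiteBelow, D, filter_filter] at hcount
    rw [hcount, ← smul_eq_mul]
    refine card_nsmul_le_sum _ _ _ fun A hA => ?_
    have hAX : #(A ∩ X) < n := (mem_filter.1 hA).2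
    have hXA : n < #(X \ A) := by
      have := card_inter_add_card_sdiff X A
      rw [inter_comm] at this
      omega
    have htwo : 2 ≤ #((X \ A).powersetCard n) := one_lt_card_powersetCard (by omega) hXA
    refine htwo.trans (card_le_card fun U hU => mem_filter.2 ⟨?_, ?_⟩)
    · exact powersetCard_mono sdiff_subset hU
    · exact sdiff_disjoint.mono_left (mem_powersetCard.1 hU).1
  rw [sum_add_distrib, ← mul_sum]
  omega

theorem card_le_of_forall_powersetCard (hF : ∀ A ∈ F, #A ≤ n + 1)
    (hs : ∀ A ∈ F, #{B ∈ F | Disjoint A B} ≤ s) (hdisj : ∀ A ∈ F, ∃ B ∈ F, Disjoint A B)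
    (hX : #X = 2 * n)
    (hXs : ∀ U ∈ X.powersetCard n,
      4 * n.centralBinom * #{A ∈ F | Disjoint U A} ≤ (4 * n.centralBinom + 1) * s)
    (hlarge : 4 * ((2 * n).choose (n + 1) + (n + 1)) < s) :
    #F ≤ n.centralBinom * (s + 1) := by
  by_contra! hcon
  have hfiber : ∀ U ∈ X.powersetCard n, s + 2 * (n + 1) < 2 * #(traceFiber F X U) := by
    intro U hU
    have := three_mul_le_card_traceFiber hF hX hXs (by linarith) hU
    omega
  have hFX : ∀ A ∈ F, #(A ∩ X) ≤ n := fun A hA =>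
    card_inter_le_of_large_traceFibers hF hs hX hfiber (hdisj A hA)
  have hbound : 2 * #F ≤ n.centralBinom * (2 * (s + 1)) :=
    calc 2 * #F ≤ _ := two_mul_card_le_sum_traceFiber_add hX hFX
      _ ≤ #(X.powersetCard n) • (2 * (s + 1)) := sum_le_card_nsmul _ _ _ fun U hU =>
          two_mul_card_traceFiber_add_card_disjoint_le hF hs hX hU
            (by have := hfiber U hU; omega)
      _ = n.centralBinom * (2 * (s + 1)) := by
          rw [card_powersetCard, hX, smul_eq_mul, Nat.centralBinom_eq_two_mul_choose]
  linarith

end TraceFibers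

theorem stmt_4_general (k : ℕ) (hk : 0 < k) :
    ∃ R s0 : ℕ, ∀ s : ℕ, s0 < s →
      ∀ (α : Type u) [DecidableEq α] (F : Finset (Finset α)),
        (∀ A ∈ F, A.card ≤ k) →
        (∀ A ∈ F, R ≤ (F.filter fun B => Disjoint A B).card ∧
          (F.filter fun B => Disjoint A B).card ≤ s) →
        F.card ≤ (s + 1) * Nat.choose (2 * k - 2) (k - 1) := by
  obtain ⟨n, rfl⟩ : ∃ n, k = n + 1 := ⟨k - 1, by omega⟩
  let M := n.centralBinom
  let t := (4 * M + 1) * (n + 1) * (n + 1)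
  let c := t ^ (n + 1)
  refine ⟨c + 1, 4 * ((2 * n).choose (n + 1) + (n + 1)) + 2 * ((c + 1) * c), ?_⟩
  intro s hs α _ F hF hFs
  have hnt : n + 1 ≤ t := Nat.le_mul_of_pos_left _ (by positivity)
  have hs' := fun A hA => (hFs A hA).2
  have hcore : ∀ T, IsFlowerCore F t T →
      4 * M * (F.filter fun A => Disjoint T A).card ≤ (4 * M + 1) * s :=
    fun T hT => hT.mul_card_disjoint_le hk hF hs' (4 * M) le_rfl
  suffices F.card ≤ M * (s + 1) by
    rwa [show 2 * (n + 1) - 2 = 2 * n by omega, Nat.add_sub_cancel,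
      ← Nat.centralBinom_eq_two_mul_choose, mul_comm]
  rcases exists_isFlowerCore_family (by omega) (by omega) hF fun A hA => (hFs A hA).1 with
    ⟨W, hWM, hW, (hrest : _ ≤ (c + 1) * c)⟩ | ⟨X, hX, hXcore⟩
  · calc F.card ≤ M * s := card_le_mul_of_forall_mul_card_filter_le hWM
          (fun T hT => hcore T (hW T hT)) (by omega)
      _ ≤ M * (s + 1) := Nat.mul_le_mul_left M s.le_succ
  · have hdisj : ∀ A ∈ F, ∃ B ∈ F, Disjoint A B := fun A hA =>
      Finset.filter_nonempty_iff.1 (Finset.card_pos.1 (c.succ_pos.trans_le (hFs A hA).1))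
    exact card_le_of_forall_powersetCard hF hs' hdisj hX (fun U hU => hcore U (hXcore U hU))
      (by omega)

/-- For every `k > 2` there exist constants `R = R(k)` and `s0 = s0(k)`
such that for every `s > s0`, any `k`-uniform `[R,s]`-almost intersecting hypergraph has
at most `(s+1) * (2k-2 choose k-1)` edges. -/
theorem stmt_4 (k : ℕ) (hk : 2 < k) :
    ∃ R s0 : ℕ, ∀ s : ℕ, s0 < s →
      ∀ (α : Type u) [DecidableEq α] (F : Finset (Finset α)),
        (∀ A ∈ F, A.card = k) →
        (∀ A ∈ F, R ≤ (F.filter fun B => Disjoint A B).card ∧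
          (F.filter fun B => Disjoint A B).card ≤ s) →
        F.card ≤ (s + 1) * Nat.choose (2 * k - 2) (k - 1) := by
  obtain ⟨R, s0, h⟩ := stmt_4_general k (by omega)
  exact ⟨R, s0, fun s hs α _ F hF => h s hs α F fun A hA => (hF A hA).le⟩
end

section
/- For every integer k > 2 and every real ε > 0, there exist constants R and s0 such that for every integer s > s0, any k-uniform [R,s]-almost intersecting hypergraph has at most (1+ε)·(s+1)·(2k-2 choose k-1) edges. -/
universe u

/-!
Fix a large number `m` of petals. Erdős and Rado's sunflower lemma supplies `R` such that any `R`
edges contain a sunflower with `m` petals; call the kernels of such sunflowers simply kernels. They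
have fewer than `k` elements.

* An edge disjoint from a kernel `K` meets at most `k` of the petals, so it misses `m - k` of the
  edges of the sunflower. Double counting shows that at most `m * s / (m - k) = (1 + o(1)) * s`
  edges are disjoint from `K`.
* The `R` edges missed by an edge `A` contain a sunflower, whose kernel is disjoint from `A`. So the
  kernels cover `F`, where `K` is said to cover `A` if they are disjoint. By Bollobás's set pair
  inequality, an irredundant subcover has boundedly many members.
* Discarding the kernels that cover fewer than `R` edges on their own loses boundedly many edges.
  For each remaining kernel `K`, the edges covered by `K` only contain a sunflower; its kernel `L`
  is disjoint from `K` but meets every other remaining kernel. The set pair inequality, now for the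
  pairs `(L, K)` of sets with at most `k - 1` elements, bounds the number of remaining kernels by
  `(2k - 2).choose (k - 1)`.
-/

open Finset
open scoped Nat

/-! ### Sunflowers -/

section Sunflower

variable {α : Type*} {F G S : Finset (Finset α)} {K B : Finset α} {k m d s : ℕ}

lemma exists_maximal_pairwiseDisjoint_subfamily (hG : ∅ ∉ G) :
    ∃ M ⊆ G, (M : Set (Finset α)).PairwiseDisjoint id ∧ ∀ A ∈ G, ∃ B ∈ M, ¬ Disjoint A B := by
  classical
  obtain ⟨M, hM⟩ := (G.powerset.filter fun M : Finset (Finset α) =>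
    (M : Set (Finset α)).PairwiseDisjoint id).exists_maximal ⟨∅, by simp⟩
  simp only [mem_filter, mem_powerset] at hM
  refine ⟨M, hM.prop.1, hM.prop.2, fun A hA => ?_⟩
  by_contra! hdisj
  have hins : insert A M ⊆ M := hM.le_of_ge
    ⟨insert_subset hA hM.prop.1, by
      rw [coe_insert]; exact hM.prop.2.insert fun B hB _ => hdisj B hB⟩ (subset_insert A M)
  have hempty : A = ∅ := disjoint_self_iff_empty A |>.1 (hdisj A (hins (mem_insert_self A M)))
  exact hG (hempty ▸ hA)

variable [DecidableEq α]

/-- `S` is a sunflower with kernel `K`: every member contains `K`, and the petals `A \ K` are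
pairwise disjoint. Petals may be empty, so a single set is a sunflower with any subset as kernel. -/
def IsSunflower (S : Finset (Finset α)) (K : Finset α) : Prop :=
  (∀ A ∈ S, K ⊆ A) ∧ (S : Set (Finset α)).PairwiseDisjoint (· \ K)

/-- `K` is the kernel of some sunflower with exactly `m` members, all of them in `F`. For large `m`,
these are the sets used to cover an almost intersecting family. -/
def IsSunflowerKernel (F : Finset (Finset α)) (m : ℕ) (K : Finset α) : Prop :=
  ∃ S ⊆ F, #S = m ∧ IsSunflower S K

namespace IsSunflower

lemma card_filter_not_disjoint_le (h : IsSunflower S K) (hKB : Disjoint K B) :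
    #{A ∈ S | ¬ Disjoint A B} ≤ #B := by
  have petals_meet : ∀ A ∈ S.filter (¬ Disjoint · B), ((A \ K) ∩ B).Nonempty := fun A hA => by
    obtain ⟨x, hxA, hxB⟩ := not_disjoint_iff.1 (mem_filter.1 hA).2
    exact ⟨x, mem_inter.2 ⟨mem_sdiff.2 ⟨hxA, disjoint_right.1 hKB hxB⟩, hxB⟩⟩
  calc #{A ∈ S | ¬ Disjoint A B}
      ≤ #({A ∈ S | ¬ Disjoint A B}.biUnion fun A => (A \ K) ∩ B) :=
        card_le_card_biUnion (fun A hA A' hA' hne =>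
          (h.2 (mem_of_mem_filter A hA) (mem_of_mem_filter A' hA') hne).mono
            inter_subset_left inter_subset_left) petals_meet
    _ ≤ #B := card_le_card (biUnion_subset.2 fun _ _ => inter_subset_right)

lemma image_insert {x : α} (h : IsSunflower S K) (hx : ∀ A ∈ S, x ∉ A) :
    IsSunflower (S.image (insert x)) (insert x K) := by
  have sdiff_eq : ∀ A ∈ S, insert x A \ insert x K = A \ K := fun A hA => by
    rw [insert_sdiff_insert, sdiff_insert_of_notMem (hx A hA)]
  refine ⟨forall_mem_image.2 fun A hA => insert_subset_insert x (h.1 A hA), ?_⟩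
  rw [coe_image]
  rintro _ ⟨A, hA, rfl⟩ _ ⟨A', hA', rfl⟩ hne
  simpa only [Function.onFun, sdiff_eq A hA, sdiff_eq A' hA'] using
    h.2 hA hA' (ne_of_apply_ne _ hne)

end IsSunflower

namespace IsSunflowerKernel

lemma mono (h : IsSunflowerKernel F m K) (hFG : F ⊆ G) : IsSunflowerKernel G m K :=
  let ⟨S, hSF, hS⟩ := h
  ⟨S, hSF.trans hFG, hS⟩

lemma card_lt (h : IsSunflowerKernel F m K) (hm : 1 < m) (hF : (F : Set (Finset α)).Sized k) :
    #K < k := by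
  obtain ⟨S, hSF, rfl, hK, -⟩ := h
  obtain ⟨A, hA, B, hB, hne⟩ := one_lt_card.1 hm
  by_contra! hk
  have eq_kernel : ∀ C ∈ S, K = C := fun C hC =>
    eq_of_subset_of_card_le (hK C hC) ((hF (hSF hC)).trans_le hk)
  exact hne ((eq_kernel A hA).symm.trans (eq_kernel B hB))

lemma disjoint (h : IsSunflowerKernel F m K) (hm : 0 < m) (hB : ∀ A ∈ F, Disjoint A B) :
    Disjoint K B := by
  obtain ⟨S, hSF, rfl, hK, -⟩ := h
  obtain ⟨A, hA⟩ := card_pos.1 hm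
  exact (hB A (hSF hA)).mono_left (hK A hA)

lemma not_disjoint (h : IsSunflowerKernel F m K) (hm : #B < m)
    (hB : ∀ A ∈ F, ¬ Disjoint A B) : ¬ Disjoint K B := by
  obtain ⟨S, hSF, rfl, hS⟩ := h
  intro hKB
  have meets := hS.card_filter_not_disjoint_le hKB
  rw [filter_true_of_mem fun A hA => hB A (hSF hA)] at meets
  exact hm.not_ge meets

/-- Double counting of the disjoint pairs formed by a petal and an edge disjoint from `K`. -/
lemma card_filter_disjoint_mul_le (h : IsSunflowerKernel F (k + d) K)
    (hF : ∀ A ∈ F, #A ≤ k) (hs : ∀ A ∈ F, #{B ∈ F | Disjoint A B} ≤ s) :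
    #{B ∈ F | Disjoint K B} * d ≤ (k + d) * s := by
  obtain ⟨S, hSF, hcard, hS⟩ := h
  rw [← hcard]
  refine card_mul_le_card_mul' (fun A B => Disjoint A B) (fun B hB => ?_) fun A hA => ?_
  · obtain ⟨hBF, hKB⟩ := mem_filter.1 hB
    have meets := (hS.card_filter_not_disjoint_le hKB).trans (hF B hBF)
    have total := S.card_filter_add_card_filter_not (Disjoint · B)
    simp only [bipartiteBelow]
    omega
  · exact (card_le_card (filter_subset_filter _ (filter_subset _ F))).trans (hs A (hSF hA))

end IsSunflowerKernel

lemma isSunflowerKernel_empty_of_pairwiseDisjoint {M : Finset (Finset α)} (hMG : M ⊆ G)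
    (hM : (M : Set (Finset α)).PairwiseDisjoint id) (hm : m ≤ #M) :
    IsSunflowerKernel G m ∅ := by
  obtain ⟨S, hSM, hS⟩ := exists_subset_card_eq hm
  refine ⟨S, hSM.trans hMG, hS, fun A _ => empty_subset A, ?_⟩
  intro A hA B hB hne
  simpa only [Function.onFun, id, sdiff_empty] using hM (hSM hA) (hSM hB) hne

lemma IsSunflowerKernel.insert_of_memberSubfamily {x : α}
    (h : IsSunflowerKernel (G.memberSubfamily x) m K) : IsSunflowerKernel G m (insert x K) := by
  obtain ⟨S, hSG, hS, hK⟩ := h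
  have hx : ∀ A ∈ S, insert x A ∈ G ∧ x ∉ A := fun A hA => mem_memberSubfamily.1 (hSG hA)
  refine ⟨S.image (insert x), image_subset_iff.2 fun A hA => (hx A hA).1, ?_,
    hK.image_insert fun A hA => (hx A hA).2⟩
  rw [card_image_of_injOn, hS]
  intro A hA B hB hAB
  rw [← erase_insert (hx A hA).2, ← erase_insert (hx B hB).2, hAB]

/-- The **sunflower lemma** of Erdős and Rado. A maximal subfamily of pairwise disjoint sets is
either a large sunflower with empty kernel, or has a small union meeting every member of `G`; in the
latter case some point lies in many members, and induction applies to its link. -/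
theorem exists_isSunflowerKernel_of_factorial_mul_pow_lt_card
    (hG : (G : Set (Finset α)).Sized k) (hcard : k ! * m ^ k < #G) :
    ∃ K, IsSunflowerKernel G (m + 1) K := by
  induction k generalizing G with
  | zero =>
    obtain ⟨A, hA, B, hB, hne⟩ := one_lt_card.1 (by simpa using hcard)
    exact absurd (hG.subsingleton hA hB) hne
  | succ k ih =>
    obtain ⟨M, hMG, hMdisj, hMmeet⟩ := exists_maximal_pairwiseDisjoint_subfamily (G := G)
      fun h => by simpa using hG h
    obtain hM | hM := Nat.lt_or_ge m #M
    · exact ⟨∅, isSunflowerKernel_empty_of_pairwiseDisjoint hMG hMdisj hM⟩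
    obtain ⟨x, hx⟩ : ∃ x, k ! * m ^ k < #(G.memberSubfamily x) := by
      by_contra! hsmall
      have hcover : G ⊆ (M.biUnion id).biUnion fun x => {A ∈ G | x ∈ A} := fun A hA => by
        obtain ⟨B, hB, hAB⟩ := hMmeet A hA
        obtain ⟨x, hxA, hxB⟩ := not_disjoint_iff.1 hAB
        exact mem_biUnion.2 ⟨x, mem_biUnion.2 ⟨B, hB, hxB⟩, mem_filter.2 ⟨hA, hxA⟩⟩
      refine hcard.not_ge ?_
      calc #G ≤ #(M.biUnion id) * (k ! * m ^ k) :=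
            (card_le_card hcover).trans <| card_biUnion_le_card_mul _ _ _ fun x _ => by
              rw [← image_insert_memberSubfamily]
              exact card_image_le.trans (hsmall x)
        _ ≤ m * (k + 1) * (k ! * m ^ k) := by
            gcongr
            exact (card_biUnion_le_card_mul M id (k + 1) fun A hA => (hG (hMG hA)).le).trans
              (Nat.mul_le_mul_right _ hM)
        _ = (k + 1)! * m ^ (k + 1) := by rw [Nat.factorial_succ]; ring
    have hlink : (G.memberSubfamily x : Set (Finset α)).Sized k := fun A hA => by
      obtain ⟨hAG, hxA⟩ := mem_memberSubfamily.1 hA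
      simpa [card_insert_of_notMem hxA] using hG hAG
    obtain ⟨K, hK⟩ := ih hlink hx
    exact ⟨insert x K, hK.insert_of_memberSubfamily⟩

end Sunflower

/-! ### Bollobás's set pair inequality -/

section SetPairs

variable {ι α : Type*}

lemma succ_mul_inv_choose_add (a b : ℕ) :
    ((b + 1 : ℕ) : ℚ) * ((a + b).choose a : ℚ)⁻¹ =
      ((a + (b + 1) : ℕ) : ℚ) * ((a + (b + 1)).choose a : ℚ)⁻¹ := by
  have hchoose : ((a + b + 1 : ℕ) : ℚ) * ((a + b).choose a : ℚ) =
      ((a + b + 1).choose a : ℚ) * ((b + 1 : ℕ) : ℚ) := by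
    rw [Nat.choose_symm_add, add_assoc, Nat.choose_symm_add (b := b + 1)]
    exact_mod_cast Nat.add_one_mul_choose_eq (a + b) b
  have hpos : ((a + b).choose a : ℚ) ≠ 0 := mod_cast (Nat.choose_pos (Nat.le_add_right a b)).ne'
  have hpos' : ((a + b + 1).choose a : ℚ) ≠ 0 := mod_cast (Nat.choose_pos (by omega)).ne'
  rw [← add_assoc, ← div_eq_mul_inv, ← div_eq_mul_inv, div_eq_div_iff hpos hpos', hchoose, mul_comm]

lemma sum_sdiff_inv_choose_card_erase [DecidableEq α] {X A B : Finset α} (hA : A ⊆ X)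
    (hB : B ⊆ X) (hAB : Disjoint A B) (hne : B.Nonempty) :
    ∑ x ∈ X \ A, ((#A + #(B.erase x)).choose #A : ℚ)⁻¹ =
      #X * ((#A + #B).choose #A : ℚ)⁻¹ := by
  obtain ⟨b, hb⟩ := Nat.exists_eq_succ_of_ne_zero hne.card_ne_zero
  have hBX : B ⊆ X \ A := subset_sdiff.2 ⟨hB, hAB.symm⟩
  have hX : #((X \ A) \ B) + (#A + #B) = #X := by
    rw [← card_sdiff_add_card_eq_card hA, ← card_sdiff_add_card_eq_card hBX]
    ring
  have sum_outside : ∑ x ∈ (X \ A) \ B, ((#A + #(B.erase x)).choose #A : ℚ)⁻¹ =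
      #((X \ A) \ B) * ((#A + #B).choose #A : ℚ)⁻¹ := by
    rw [← nsmul_eq_mul]
    exact sum_eq_card_nsmul fun x hx => by rw [erase_eq_of_notMem (mem_sdiff.1 hx).2]
  have sum_inside : ∑ x ∈ B, ((#A + #(B.erase x)).choose #A : ℚ)⁻¹ =
      ((#A + #B : ℕ) : ℚ) * ((#A + #B).choose #A : ℚ)⁻¹ := by
    rw [hb, ← succ_mul_inv_choose_add, ← Nat.succ_eq_add_one, ← hb, ← nsmul_eq_mul]
    exact sum_eq_card_nsmul fun x hx => by rw [card_erase_of_mem hx, hb, Nat.succ_sub_one]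
  rw [← sum_sdiff hBX, sum_outside, sum_inside, ← add_mul, ← Nat.cast_add, hX]

/-- **Bollobás's set pair inequality**, by induction on the ground set `X`: deleting a point `x`
from the sets `B i` and dropping the pairs with `x ∈ A i` leaves a cross-intersecting system on
`X.erase x`, and averaging over `x` recovers the original sum. -/
theorem sum_inv_choose_card_le_one {I : Finset ι} {A B : ι → Finset α} {X : Finset α}
    (hA : ∀ i ∈ I, A i ⊆ X) (hB : ∀ i ∈ I, B i ⊆ X)
    (h : ∀ i ∈ I, ∀ j ∈ I, Disjoint (A i) (B j) ↔ i = j) :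
    ∑ i ∈ I, ((#(A i) + #(B i)).choose #(A i) : ℚ)⁻¹ ≤ 1 := by
  classical
  induction X using Finset.strongInduction generalizing I B with
  | H X ih =>
  obtain rfl | ⟨i₀, hi₀⟩ := I.eq_empty_or_nonempty
  · simp
  by_cases hempty : ∃ i ∈ I, B i = ∅
  · obtain ⟨i, hi, hBi⟩ := hempty
    have hI : I = {i} := eq_singleton_iff_unique_mem.2
      ⟨hi, fun j hj => (h j hj i hi).1 (hBi ▸ disjoint_empty_right _)⟩
    simp [hI, hBi]
  have hne : ∀ i ∈ I, (B i).Nonempty := fun i hi =>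
    nonempty_iff_ne_empty.2 fun hBi => hempty ⟨i, hi, hBi⟩
  have deleted : ∀ x ∈ X,
      ∑ i ∈ I with x ∉ A i, ((#(A i) + #((B i).erase x)).choose #(A i) : ℚ)⁻¹ ≤ 1 := by
    intro x hx
    refine ih (X.erase x) (erase_ssubset hx) (fun i hi => ?_) (fun i hi => ?_) fun i hi j hj => ?_
    · exact subset_erase.2 ⟨hA i (mem_of_mem_filter i hi), (mem_filter.1 hi).2⟩
    · exact erase_subset_erase x (hB i (mem_of_mem_filter i hi))
    · rw [← h i (mem_of_mem_filter i hi) j (mem_of_mem_filter j hj), ← disjoint_erase_comm,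
        erase_eq_of_notMem (mem_filter.1 hi).2]
  have hX : (0 : ℚ) < #X := mod_cast card_pos.2 ((hne i₀ hi₀).mono (hB i₀ hi₀))
  refine le_of_mul_le_mul_left ?_ hX
  calc #X * ∑ i ∈ I, ((#(A i) + #(B i)).choose #(A i) : ℚ)⁻¹
      = ∑ i ∈ I, ∑ x ∈ X \ A i, ((#(A i) + #((B i).erase x)).choose #(A i) : ℚ)⁻¹ := by
        rw [mul_sum]
        exact sum_congr rfl fun i hi => (sum_sdiff_inv_choose_card_erase (hA i hi) (hB i hi)
          ((h i hi i hi).2 rfl) (hne i hi)).symm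
    _ = ∑ x ∈ X, ∑ i ∈ I with x ∉ A i,
          ((#(A i) + #((B i).erase x)).choose #(A i) : ℚ)⁻¹ :=
        sum_comm' fun i x => by simp only [mem_sdiff, mem_filter]; tauto
    _ ≤ #X * 1 := by simpa only [nsmul_eq_mul] using sum_le_card_nsmul X _ 1 deleted

lemma choose_add_le_choose_add {a a' b b' : ℕ} (ha : a ≤ a') (hb : b ≤ b') :
    (a + b).choose a ≤ (a' + b').choose a' :=
  calc (a + b).choose a
      ≤ (a + b').choose a := Nat.choose_le_choose a (Nat.add_le_add_left hb a)
    _ = (a + b').choose b' := Nat.choose_symm_add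
    _ ≤ (a' + b').choose b' := Nat.choose_le_choose b' (Nat.add_le_add_right ha b')
    _ = (a' + b').choose a' := Nat.choose_symm_add.symm

theorem card_le_choose_of_disjoint_iff {I : Finset ι} {A B : ι → Finset α} {a b : ℕ}
    (hA : ∀ i ∈ I, #(A i) ≤ a) (hB : ∀ i ∈ I, #(B i) ≤ b)
    (h : ∀ i ∈ I, ∀ j ∈ I, Disjoint (A i) (B j) ↔ i = j) : #I ≤ (a + b).choose a := by
  classical
  have hpos : (0 : ℚ) < (a + b).choose a := mod_cast Nat.choose_pos (Nat.le_add_right a b)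
  have hsum : #I * ((a + b).choose a : ℚ)⁻¹ ≤ 1 :=
    calc #I * ((a + b).choose a : ℚ)⁻¹
        ≤ ∑ i ∈ I, ((#(A i) + #(B i)).choose #(A i) : ℚ)⁻¹ := by
          rw [← nsmul_eq_mul]
          refine card_nsmul_le_sum I _ _ fun i hi => inv_anti₀ ?_ ?_
          · exact_mod_cast Nat.choose_pos (Nat.le_add_right _ _)
          · exact_mod_cast choose_add_le_choose_add (hA i hi) (hB i hi)
      _ ≤ 1 := sum_inv_choose_card_le_one (X := I.biUnion A ∪ I.biUnion B)
          (fun i hi => (subset_biUnion_of_mem A hi).trans subset_union_left)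
          (fun i hi => (subset_biUnion_of_mem B hi).trans subset_union_right) h
  rw [← div_eq_mul_inv, div_le_one hpos] at hsum
  exact_mod_cast hsum

end SetPairs

/-! ### Covers -/

section Covers

variable {κ β : Type*} (r : κ → β → Prop)

lemma exists_irredundant_subcover {F : Finset β} {𝒦 : Set κ}
    (hcov : ∀ A ∈ F, ∃ K ∈ 𝒦, r K A) :
    ∃ 𝒞 : Finset κ, ↑𝒞 ⊆ 𝒦 ∧ (∀ A ∈ F, ∃ K ∈ 𝒞, r K A) ∧
      ∀ K ∈ 𝒞, ∃ A ∈ F, ∀ K' ∈ 𝒞, r K' A → K' = K := by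
  classical
  choose f hf𝒦 hf using hcov
  obtain ⟨𝒞, h𝒞⟩ := exists_minimal_of_wellFoundedLT
    (fun 𝒞 : Finset κ => ↑𝒞 ⊆ 𝒦 ∧ ∀ A ∈ F, ∃ K ∈ 𝒞, r K A)
    ⟨F.attach.image fun A : F => f A A.2,
      fun K hK => by obtain ⟨A, -, rfl⟩ := mem_image.1 hK; exact hf𝒦 A A.2,
      fun A hA => ⟨f A hA, mem_image_of_mem _ (mem_attach F ⟨A, hA⟩), hf A hA⟩⟩
  refine ⟨𝒞, h𝒞.prop.1, h𝒞.prop.2, fun K hK => ?_⟩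
  by_contra! hredundant
  have herase : 𝒞 ⊆ 𝒞.erase K := h𝒞.le_of_le
    ⟨(coe_subset.2 (erase_subset K 𝒞)).trans h𝒞.prop.1, fun A hA => by
      obtain ⟨K', hK', hr, hne⟩ := hredundant A hA
      exact ⟨K', mem_erase.2 ⟨hne, hK'⟩, hr⟩⟩ (erase_subset K 𝒞)
  exact notMem_erase K 𝒞 (herase hK)

variable [∀ K A, Decidable (r K A)]

/-- The elements of `F` covered by no member of `𝒞`, where `r K A` means that `K` covers `A`;
the part of `F` that a thinned-out cover gives up. -/
def uncovered (F : Finset β) (𝒞 : Finset κ) : Finset β :=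
  {A ∈ F | ∀ K ∈ 𝒞, ¬ r K A}

lemma card_le_sum_card_add_card_uncovered (F : Finset β) (𝒞 : Finset κ) :
    #F ≤ ∑ K ∈ 𝒞, #{A ∈ F | r K A} + #(uncovered r F 𝒞) := by
  classical
  have hF : F ⊆ (𝒞.biUnion fun K => {A ∈ F | r K A}) ∪ uncovered r F 𝒞 := fun A hA => by
    simp only [uncovered, mem_union, mem_biUnion, mem_filter]
    grind
  calc #F ≤ #(𝒞.biUnion fun K => {A ∈ F | r K A}) + #(uncovered r F 𝒞) :=
        (card_le_card hF).trans (card_union_le _ _)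
    _ ≤ _ := Nat.add_le_add_right card_biUnion_le _

variable [DecidableEq κ]

/-- The elements of `F` covered by `K` and by no other member of `𝒞`, where `r K A` means that `K`
covers `A`. Large private parts force the members of `𝒞` into a set pair system. -/
def coveredOnlyBy (F : Finset β) (𝒞 : Finset κ) (K : κ) : Finset β :=
  {A ∈ F | r K A ∧ ∀ K' ∈ 𝒞, r K' A → K' = K}

/-- The subfamily is one that minimizes `#(uncovered r F 𝒞) + R * #𝒞`. -/
lemma exists_subset_le_card_coveredOnlyBy (R : ℕ) {F : Finset β} {𝒞₀ : Finset κ}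
    (hcov : ∀ A ∈ F, ∃ K ∈ 𝒞₀, r K A) :
    ∃ 𝒞 ⊆ 𝒞₀, #(uncovered r F 𝒞) ≤ R * #𝒞₀ ∧ ∀ K ∈ 𝒞, R ≤ #(coveredOnlyBy r F 𝒞 K) := by
  classical
  obtain ⟨𝒞, h𝒞, hmin⟩ := exists_min_image 𝒞₀.powerset
    (fun 𝒞 => #(uncovered r F 𝒞) + R * #𝒞) ⟨𝒞₀, mem_powerset_self 𝒞₀⟩
  rw [mem_powerset] at h𝒞
  refine ⟨𝒞, h𝒞, ?_, fun K hK => ?_⟩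
  · have huncov : uncovered r F 𝒞₀ = ∅ := filter_eq_empty_iff.2 fun A hA hno =>
      let ⟨K, hK, hKA⟩ := hcov A hA
      hno K hK hKA
    have hle := hmin 𝒞₀ (mem_powerset_self 𝒞₀)
    rw [huncov, card_empty] at hle
    omega
  · have hsub : uncovered r F (𝒞.erase K) ⊆ uncovered r F 𝒞 ∪ coveredOnlyBy r F 𝒞 K := by
      intro A hA
      simp only [uncovered, coveredOnlyBy, mem_union, mem_filter, mem_erase] at hA ⊢
      grind
    have hcard := (card_le_card hsub).trans (card_union_le _ _)
    have hle := hmin (𝒞.erase K) (mem_powerset.2 ((erase_subset K 𝒞).trans h𝒞))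
    rw [← card_erase_add_one hK, mul_add_one] at hle
    omega

end Covers

/-! ### Almost intersecting families -/

section AlmostIntersecting

variable {α : Type*} {F 𝒞 : Finset (Finset α)} {k m b : ℕ}

lemma exists_subcover_card_le_choose {𝒦 : Set (Finset α)} (hF : ∀ A ∈ F, #A ≤ k)
    (h𝒦 : ∀ K ∈ 𝒦, #K ≤ b) (hcov : ∀ A ∈ F, ∃ K ∈ 𝒦, Disjoint K A) :
    ∃ 𝒞 : Finset (Finset α), ↑𝒞 ⊆ 𝒦 ∧ #𝒞 ≤ (k + b).choose k ∧
      ∀ A ∈ F, ∃ K ∈ 𝒞, Disjoint K A := by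
  obtain ⟨𝒞, h𝒞, hcov𝒞, hirr⟩ := exists_irredundant_subcover (fun K A => Disjoint K A) hcov
  refine ⟨𝒞, h𝒞, ?_, hcov𝒞⟩
  choose! A hAF hA using hirr
  refine card_le_choose_of_disjoint_iff (A := A) (B := id) (fun K hK => hF _ (hAF K hK))
    (fun K hK => h𝒦 K (h𝒞 hK)) fun K hK K' hK' => ⟨fun hd => (hA K hK K' hK' hd.symm).symm, ?_⟩
  rintro rfl
  obtain ⟨K', hK', hd⟩ := hcov𝒞 (A K) (hAF K hK)
  exact hA K hK K' hK' hd ▸ hd.symm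

variable [DecidableEq α]

lemma card_le_centralBinom_of_lt_card_coveredOnlyBy (hkm : k < m)
    (hF : (F : Set (Finset α)).Sized (k + 1)) (h𝒞 : ∀ K ∈ 𝒞, #K ≤ k)
    (hpriv : ∀ K ∈ 𝒞, (k + 1)! * m ^ (k + 1) < #(coveredOnlyBy Disjoint F 𝒞 K)) :
    #𝒞 ≤ k.centralBinom := by
  have hsized : ∀ K, (coveredOnlyBy Disjoint F 𝒞 K : Set (Finset α)).Sized (k + 1) := fun K =>
    hF.mono (coe_subset.2 (filter_subset _ F))
  have hL : ∀ K ∈ 𝒞, ∃ L, IsSunflowerKernel (coveredOnlyBy Disjoint F 𝒞 K) (m + 1) L :=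
    fun K hK => exists_isSunflowerKernel_of_factorial_mul_pow_lt_card (hsized K) (hpriv K hK)
  choose! L hL using hL
  have hLcard : ∀ K ∈ 𝒞, #(L K) ≤ k := fun K hK =>
    Nat.lt_succ_iff.1 ((hL K hK).card_lt (by omega) (hsized K))
  rw [Nat.centralBinom, two_mul]
  refine card_le_choose_of_disjoint_iff (A := L) (B := id) hLcard h𝒞
    fun K hK K' hK' => ⟨fun hd => ?_, ?_⟩
  · by_contra hne
    refine (hL K hK).not_disjoint ((h𝒞 K' hK').trans_lt (by omega)) (fun A hA hAK' => ?_) hd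
    exact hne ((mem_filter.1 hA).2.2 K' hK' hAK'.symm).symm
  · rintro rfl
    exact (hL K hK).disjoint m.succ_pos fun A hA => (mem_filter.1 hA).2.1.symm

lemma exists_card_le_centralBinom_card_uncovered_le {R : ℕ} (hkm : k < m)
    (hR : (k + 1)! * m ^ (k + 1) < R) (hF : (F : Set (Finset α)).Sized (k + 1))
    (hFR : ∀ A ∈ F, R ≤ #{B ∈ F | Disjoint A B}) :
    ∃ 𝒞 : Finset (Finset α), (∀ K ∈ 𝒞, IsSunflowerKernel F (m + 1) K) ∧
      #𝒞 ≤ k.centralBinom ∧ #(uncovered Disjoint F 𝒞) ≤ R * (k + 1 + k).choose (k + 1) := by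
  have hsmall : ∀ K, IsSunflowerKernel F (m + 1) K → #K ≤ k := fun K hK =>
    Nat.lt_succ_iff.1 (hK.card_lt (by omega) hF)
  have hcov : ∀ A ∈ F, ∃ K ∈ {K | IsSunflowerKernel F (m + 1) K}, Disjoint K A := by
    intro A hA
    obtain ⟨K, hK⟩ := exists_isSunflowerKernel_of_factorial_mul_pow_lt_card
      (hF.mono (coe_subset.2 (filter_subset (Disjoint A) F))) (hR.trans_le (hFR A hA))
    exact ⟨K, hK.mono (filter_subset _ F),
      hK.disjoint m.succ_pos fun B hB => (mem_filter.1 hB).2.symm⟩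
  obtain ⟨𝒞₀, h𝒞₀, h𝒞₀card, h𝒞₀cov⟩ :=
    exists_subcover_card_le_choose (fun A hA => (hF hA).le) hsmall hcov
  obtain ⟨𝒞, h𝒞, huncov, hpriv⟩ := exists_subset_le_card_coveredOnlyBy Disjoint R h𝒞₀cov
  refine ⟨𝒞, fun K hK => h𝒞₀ (h𝒞 hK), ?_, huncov.trans (Nat.mul_le_mul_left R h𝒞₀card)⟩
  exact card_le_centralBinom_of_lt_card_coveredOnlyBy hkm hF
    (fun K hK => hsmall K (h𝒞₀ (h𝒞 hK))) fun K hK => hR.trans_le (hpriv K hK)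

lemma card_mul_le_centralBinom_mul_add {d R s : ℕ} (hd : 0 < d)
    (hR : (k + 1)! * (k + d) ^ (k + 1) < R) (hF : (F : Set (Finset α)).Sized (k + 1))
    (hFR : ∀ A ∈ F, R ≤ #{B ∈ F | Disjoint A B}) (hFs : ∀ A ∈ F, #{B ∈ F | Disjoint A B} ≤ s) :
    #F * d ≤ k.centralBinom * ((k + 1 + d) * s) + R * (k + 1 + k).choose (k + 1) * d := by
  obtain ⟨𝒞, hker, hcard, huncov⟩ :=
    exists_card_le_centralBinom_card_uncovered_le (by omega) hR hF hFR
  have hdeg : ∀ K ∈ 𝒞, #{A ∈ F | Disjoint K A} * d ≤ (k + 1 + d) * s := fun K hK => by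
    have hK : IsSunflowerKernel F (k + 1 + d) K := by simpa only [add_right_comm] using hker K hK
    exact hK.card_filter_disjoint_mul_le (fun A hA => (hF hA).le) hFs
  calc #F * d ≤ (∑ K ∈ 𝒞, #{A ∈ F | Disjoint K A} + #(uncovered Disjoint F 𝒞)) * d :=
        Nat.mul_le_mul_right d (card_le_sum_card_add_card_uncovered Disjoint F 𝒞)
    _ = ∑ K ∈ 𝒞, #{A ∈ F | Disjoint K A} * d + #(uncovered Disjoint F 𝒞) * d := by
        rw [add_mul, sum_mul]
    _ ≤ #𝒞 * ((k + 1 + d) * s) + #(uncovered Disjoint F 𝒞) * d :=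
        Nat.add_le_add_right (sum_le_card_nsmul 𝒞 _ _ hdeg) _
    _ ≤ _ := by gcongr

end AlmostIntersecting

lemma le_one_add_mul_of_mul_le {n d s k C N ε : ℝ} (hd : 0 < d) (hC : 1 ≤ C) (hs : 0 ≤ s)
    (hk : k ≤ ε / 2 * d) (hN : N ≤ ε / 2 * s) (hN₀ : 0 ≤ N)
    (h : n * d ≤ C * ((k + d) * s) + N * d) : n ≤ (1 + ε) * s * C := by
  refine le_of_mul_le_mul_right ?_ hd
  calc n * d ≤ C * ((k + d) * s) + N * d := h
    _ ≤ C * ((ε / 2 * d + d) * s) + ε / 2 * s * C * d := by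
        gcongr
        exact hN.trans (le_mul_of_one_le_right (hN₀.trans hN) hC)
    _ = (1 + ε) * s * C * d := by ring

theorem stmt_7_general (k : ℕ) (hk : 0 < k) (ε : ℝ) (hε : 0 < ε) :
    ∃ R s0 : ℕ, ∀ s : ℕ, s0 < s →
      ∀ (α : Type u) [DecidableEq α] (F : Finset (Finset α)),
        (∀ A ∈ F, A.card = k) →
        (∀ A ∈ F, R ≤ (F.filter fun B => Disjoint A B).card ∧
          (F.filter fun B => Disjoint A B).card ≤ s) →
        (F.card : ℝ) ≤ (1 + ε) * (s + 1) * Nat.choose (2 * k - 2) (k - 1) := by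
  obtain ⟨k, rfl⟩ := Nat.exists_eq_succ_of_ne_zero hk.ne'
  obtain ⟨d, hd⟩ := exists_nat_gt ((k + 1 : ℕ) / (ε / 2))
  have hd₀ : (0 : ℝ) < d := lt_of_le_of_lt (by positivity) hd
  set R := (k + 1)! * (k + d) ^ (k + 1) + 1
  set N := R * (k + 1 + k).choose (k + 1)
  obtain ⟨s0, hs0⟩ := exists_nat_gt (N / (ε / 2))
  refine ⟨R, s0, fun s hs α _ F hF hFs => ?_⟩
  have hcount := card_mul_le_centralBinom_mul_add (mod_cast hd₀) (Nat.lt_succ_self _)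
    (fun A hA => hF A hA) (fun A hA => (hFs A hA).1) fun A hA => (hFs A hA).2
  have hbound : (#F : ℝ) ≤ (1 + ε) * s * k.centralBinom :=
    le_one_add_mul_of_mul_le (k := (k + 1 : ℕ)) (N := N) hd₀
      (mod_cast k.centralBinom_pos) s.cast_nonneg ((div_lt_iff₀' (half_pos hε)).1 hd).le
      ((div_lt_iff₀' (half_pos hε)).1 (hs0.trans (mod_cast hs))).le N.cast_nonneg
      (mod_cast hcount)
  rw [show 2 * k.succ - 2 = 2 * k by omega, Nat.succ_sub_one, ← Nat.centralBinom]
  exact hbound.trans (by gcongr; linarith)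

/-- For every `k > 2` and real `ε > 0`, there exist constants `R` and `s0`
such that for every `s > s0`, any `k`-uniform `[R,s]`-almost intersecting hypergraph has at
most `(1+ε) * (s+1) * (2k-2 choose k-1)` edges. -/
theorem stmt_7 (k : ℕ) (hk : 2 < k) (ε : ℝ) (hε : 0 < ε) :
    ∃ R s0 : ℕ, ∀ s : ℕ, s0 < s →
      ∀ (α : Type u) [DecidableEq α] (F : Finset (Finset α)),
        (∀ A ∈ F, A.card = k) →
        (∀ A ∈ F, R ≤ (F.filter fun B => Disjoint A B).card ∧
          (F.filter fun B => Disjoint A B).card ≤ s) →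
        (F.card : ℝ) ≤ (1 + ε) * (s + 1) * Nat.choose (2 * k - 2) (k - 1) :=
  stmt_7_general k (by omega) ε hε
end
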